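/- In the setting of an inverse system of compact Hausdorff spaces over a nonempty directed poset J with limit X: for every j ∈ J and every continuous function h : X_j → ℝ, one has ‖h ∘ π_j‖ = ⨅_{k ∈ J, k ≥ j} ‖h ∘ f_{k j}‖, where ‖·‖ denotes the supremum norm. (This expresses that the canonical map from the naive colimit of the Banach spaces C(X_j;ℝ) to C(X;ℝ) is isometric.) -/

import Mathlib

/-!
For an inverse system of compact Hausdorff spaces over a nonempty directed poset with limit
`X`: for any stage `j` and continuous `h : X_j → ℝ`, the supremum norm of `h ∘ π_j` equals
the infimum over `k ≥ j` of the supremum norms of `h ∘ f_{k j}`.  (Supremum norms are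
expressed as suprema of absolute values; the supremum over an empty space is `0`.)
-/

universe u

/-!
A thread is a point of the product lying in all the closed sets `compatibleBelow f l`, which shrink
as `l` grows. By compactness, an open set `U ⊆ X j` containing the `j`-th coordinate of every thread
already contains the `j`-th coordinate of every point of some `compatibleBelow f l`, hence the image
of `X k` for some `k ≥ j`. For `g = |h|`, taking for `U` the sublevel sets `{g < b}`, with `b` above
the supremum of `g` over the threads, bounds the infimum of the suprema over the stages by `b`.
-/

section InverseSystem

variable {J : Type*} [Preorder J] {X : J → Type*} {f : ∀ j k : J, j ≤ k → X k → X j}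

/-- The inverse limit of the spaces `X j` along the transition maps `f j k : X k → X j`, as the set
of threads in the product. -/
def inverseLimit (f : ∀ j k : J, j ≤ k → X k → X j) : Set (∀ j, X j) :=
  {x | ∀ (j k : J) (hjk : j ≤ k), f j k hjk (x k) = x j}

/-- The stage-`l` approximation to the inverse limit: the points of the product whose coordinates
below `l` are the images of the `l`-th one. Coordinates not below `l` are unconstrained. -/
def compatibleBelow (f : ∀ j k : J, j ≤ k → X k → X j) (l : J) : Set (∀ j, X j) :=
  {x | ∀ (j : J) (hjl : j ≤ l), f j l hjl (x l) = x j}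

theorem iInter_compatibleBelow : ⋂ l, compatibleBelow f l = inverseLimit f :=
  Set.ext fun _ => Set.mem_iInter.trans forall_comm

theorem antitone_compatibleBelow
    (hcomp : ∀ (j k l : J) (hjk : j ≤ k) (hkl : k ≤ l) (x : X l),
      f j k hjk (f k l hkl x) = f j l (hjk.trans hkl) x) :
    Antitone (compatibleBelow f) := by
  intro l m hlm x hx j hjl
  calc f j l hjl (x l) = f j l hjl (f l m hlm (x m)) := by rw [hx l hlm]
    _ = f j m (hjl.trans hlm) (x m) := hcomp j l m hjl hlm (x m)
    _ = x j := hx j (hjl.trans hlm)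

theorem exists_mem_compatibleBelow_forall_apply_eq [∀ j, Nonempty (X j)]
    (hcomp : ∀ (j k l : J) (hjk : j ≤ k) (hkl : k ≤ l) (x : X l),
      f j k hjk (f k l hkl x) = f j l (hjk.trans hkl) x)
    {l : J} (y : X l) :
    ∃ x ∈ compatibleBelow f l, ∀ (j : J) (hjl : j ≤ l), x j = f j l hjl y := by
  classical
  let x : ∀ j, X j := fun j => if hjl : j ≤ l then f j l hjl y else Classical.arbitrary (X j)
  have hx (j : J) (hjl : j ≤ l) : x j = f j l hjl y := dif_pos hjl
  refine ⟨x, fun j hjl => ?_, hx⟩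
  rw [hx l le_rfl, hcomp, hx j hjl]

variable [∀ j, TopologicalSpace (X j)] [∀ j, T2Space (X j)]

theorem isClosed_compatibleBelow
    (hcont : ∀ (j k : J) (hjk : j ≤ k), Continuous (f j k hjk)) (l : J) :
    IsClosed (compatibleBelow f l) := by
  simp only [compatibleBelow, Set.ofPred_forall]
  exact isClosed_iInter fun j => isClosed_iInter fun hjl =>
    isClosed_eq ((hcont j l hjl).comp (continuous_apply l)) (continuous_apply j)

variable [IsDirected J (· ≤ ·)] [∀ j, CompactSpace (X j)]

theorem exists_compatibleBelow_subset_of_inverseLimit_subset [Nonempty J]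
    (hcont : ∀ (j k : J) (hjk : j ≤ k), Continuous (f j k hjk))
    (hcomp : ∀ (j k l : J) (hjk : j ≤ k) (hkl : k ≤ l) (x : X l),
      f j k hjk (f k l hkl x) = f j l (hjk.trans hkl) x)
    {W : Set (∀ j, X j)} (hW : IsOpen W) (hlim : inverseLimit f ⊆ W) :
    ∃ l, compatibleBelow f l ⊆ W := by
  refine exists_subset_nhds_of_compactSpace (antitone_compatibleBelow hcomp).directed_ge
    (isClosed_compatibleBelow hcont) fun x hx => hW.mem_nhds (hlim ?_)
  rwa [iInter_compatibleBelow] at hx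

theorem exists_range_transition_subset_of_forall_inverseLimit_apply_mem
    (hcont : ∀ (j k : J) (hjk : j ≤ k), Continuous (f j k hjk))
    (hcomp : ∀ (j k l : J) (hjk : j ≤ k) (hkl : k ≤ l) (x : X l),
      f j k hjk (f k l hkl x) = f j l (hjk.trans hkl) x)
    {j : J} {U : Set (X j)} (hU : IsOpen U) (hlim : ∀ x ∈ inverseLimit f, x j ∈ U) :
    ∃ (k : J) (hjk : j ≤ k), Set.range (f j k hjk) ⊆ U := by
  by_cases hne : ∀ i, Nonempty (X i)
  · have : Nonempty J := ⟨j⟩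
    obtain ⟨l, hl⟩ := exists_compatibleBelow_subset_of_inverseLimit_subset hcont hcomp
      (hU.preimage (continuous_apply j)) hlim
    obtain ⟨k, hjk, hlk⟩ := exists_ge_ge j l
    refine ⟨k, hjk, Set.range_subset_iff.2 fun y => ?_⟩
    obtain ⟨x, hx, hxy⟩ := exists_mem_compatibleBelow_forall_apply_eq hcomp y
    rw [← hxy j hjk]
    exact hl (antitone_compatibleBelow hcomp hlk hx)
  · obtain ⟨i, hi⟩ := not_forall.1 hne
    obtain ⟨k, hjk, hik⟩ := exists_ge_ge j i
    exact ⟨k, hjk, Set.range_subset_iff.2 fun y => (hi ⟨f i k hik y⟩).elim⟩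

theorem norm_comp_proj_eq_iInf_norm_comp_transition_general
    (hcont : ∀ (j k : J) (hjk : j ≤ k), Continuous (f j k hjk))
    (hcomp : ∀ (j k l : J) (hjk : j ≤ k) (hkl : k ≤ l) (x : X l),
      f j k hjk (f k l hkl x) = f j l (hjk.trans hkl) x)
    {j : J} {g : X j → ℝ} (hg : UpperSemicontinuous g) (hg_nonneg : 0 ≤ g) :
    ⨆ x : inverseLimit f, g (x.1 j) =
      ⨅ k : {k : J // j ≤ k}, ⨆ y : X k.1, g (f j k.1 k.2 y) := by
  have : Nonempty {k : J // j ≤ k} := ⟨⟨j, le_rfl⟩⟩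
  have bddAbove_range : BddAbove (Set.range g) := by
    rw [← Set.image_univ]
    exact (hg.upperSemicontinuousOn Set.univ).bddAbove_of_isCompact isCompact_univ
  have stage_sup_nonneg (k : {k : J // j ≤ k}) : 0 ≤ ⨆ y, g (f j k.1 k.2 y) :=
    Real.iSup_nonneg fun _ => hg_nonneg _
  apply le_antisymm
  · refine le_ciInf fun k => Real.iSup_le (fun x => ?_) (stage_sup_nonneg k)
    rw [← x.2 j k.1 k.2]
    exact le_ciSup (bddAbove_range.mono (Set.range_comp_subset_range (f j k.1 k.2) g)) (x.1 k.1)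
  · refine le_of_forall_gt_imp_ge_of_dense fun b hb => ?_
    have lt_b (x) (hx : x ∈ inverseLimit f) : g (x j) < b :=
      (le_ciSup (bddAbove_range.mono (Set.range_comp_subset_range
        (fun z : inverseLimit f => z.1 j) g)) ⟨x, hx⟩).trans_lt hb
    have b_nonneg : 0 ≤ b := (Real.iSup_nonneg fun _ => hg_nonneg _).trans hb.le
    obtain ⟨k, hjk, hk⟩ := exists_range_transition_subset_of_forall_inverseLimit_apply_mem
      hcont hcomp (hg.isOpen_preimage b) lt_b
    calc ⨅ k : {k : J // j ≤ k}, ⨆ y : X k.1, g (f j k.1 k.2 y)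
        ≤ ⨆ y, g (f j k hjk y) :=
          ciInf_le ⟨0, Set.forall_mem_range.2 stage_sup_nonneg⟩ (⟨k, hjk⟩ : {k : J // j ≤ k})
      _ ≤ b := Real.iSup_le (fun y => (hk (Set.mem_range_self y)).le) b_nonneg

end InverseSystem

theorem norm_comp_proj_eq_iInf_norm_comp_transition
    {J : Type u} [PartialOrder J] [Nonempty J] [IsDirected J (· ≤ ·)]
    (X : J → Type u) [∀ j, TopologicalSpace (X j)]
    [∀ j, CompactSpace (X j)] [∀ j, T2Space (X j)]
    (f : ∀ j k : J, j ≤ k → X k → X j)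
    (hcont : ∀ (j k : J) (h : j ≤ k), Continuous (f j k h))
    (hid : ∀ (j : J) (x : X j), f j j le_rfl x = x)
    (hcomp : ∀ (j k l : J) (hjk : j ≤ k) (hkl : k ≤ l) (x : X l),
      f j k hjk (f k l hkl x) = f j l (hjk.trans hkl) x)
    (j : J) (h : C(X j, ℝ)) :
    (⨆ x : {x : ∀ j, X j // ∀ (j k : J) (hjk : j ≤ k), f j k hjk (x k) = x j},
        |h (x.1 j)|) =
      ⨅ k : {k : J // j ≤ k}, ⨆ y : X k.1, |h (f j k.1 k.2 y)| := by
  exact norm_comp_proj_eq_iInf_norm_comp_transition_general hcont hcomp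
    h.continuous.abs.upperSemicontinuous fun x => abs_nonneg (h x)
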